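/- Let X be a nonnegative random variable with E[X] < ∞ and log X integrable. Then E[X] − exp(E[log X]) ≤ max(2·Var(√X), E[(√X − √m_X)²]), where m_X := essInf X. -/

import Mathlib

open MeasureTheory ProbabilityTheory Real

/-!
If `m_X = 0`, the second term of the maximum is `E X`. Otherwise divide by `m_X` so that
`√X = 1 + Z` with `0 ≤ Z`, and write `N = E Z`, `W = E Z²`. The function `z ↦ log (1 + z) / z` is
convex; Jensen's inequality for it under the measure with density `Z / N` gives
`(N² / W) log (1 + W / N) ≤ E log (1 + Z)`: among the laws with these two moments, the one carried
by `{0, W / N}` minimizes `E log (1 + Z)`. Exponentiating leaves a lower bound for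
`(1 + W / N) ^ (2 N² / W)`. Bernoulli's inequality yields `1 + 2 N` if the exponent is at least
`1`, and its second-order version yields `1 + 2 N + 2 N² - W` otherwise. Subtracted from
`E (1 + Z)² = 1 + 2 N + W`, they leave `W` and `2 (W - N²)`, the two terms of the maximum.
-/

section RealInequalities

lemma hasDerivAt_log_one_add_mul {s x : ℝ} (h : 1 + s * x ≠ 0) :
    HasDerivAt (fun s => log (1 + s * x)) (x / (1 + s * x)) s := by
  simpa using (((hasDerivAt_id s).mul_const x).const_add 1).log h

lemma tangent_one_div_one_add_mul_le {s t z : ℝ} (ht : 1 + s * t ≠ 0) (hz : 0 < 1 + s * z) :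
    1 / (1 + s * t) - s / (1 + s * t) ^ 2 * (z - t) ≤ 1 / (1 + s * z) := by
  have hdiff : 1 / (1 + s * z) - (1 / (1 + s * t) - s / (1 + s * t) ^ 2 * (z - t)) =
      (s * (z - t)) ^ 2 / ((1 + s * z) * (1 + s * t) ^ 2) := by
    have := hz.ne'
    field_simp
    ring
  rw [← sub_nonneg, hdiff]
  positivity

/- `log (1 + x) / x` is the integral of `1 / (1 + s * x)` over `s ∈ [0, 1]`, so its tangent line at
`t` is the integral of theirs; this is carried out by comparing derivatives in `s`. -/
lemma mul_tangent_log_one_add_div_le {t z : ℝ} (ht : 0 < t) (hz : 0 ≤ z) :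
    z * (log (1 + t) / t + (1 / (t * (1 + t)) - log (1 + t) / t ^ 2) * (z - t)) ≤ log (1 + z) := by
  have pos_of {s x : ℝ} (hs : 0 ≤ s) (hx : 0 ≤ x) : 0 < 1 + s * x := by positivity
  let f : ℝ → ℝ := fun s =>
    z * (log (1 + s * t) / t + (s / (t * (1 + s * t)) - log (1 + s * t) / t ^ 2) * (z - t))
  have hf : ∀ s ∈ Set.Icc (0 : ℝ) 1,
      HasDerivAt f (z * (1 / (1 + s * t) - s / (1 + s * t) ^ 2 * (z - t))) s := by
    intro s hs
    have hst := (pos_of hs.1 ht.le).ne'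
    have hlog := hasDerivAt_log_one_add_mul hst
    have hden := (((hasDerivAt_id s).mul_const t).const_add 1).const_mul t
    have hfrac := (hasDerivAt_id s).div hden (mul_ne_zero ht.ne' hst)
    refine (((hlog.div_const t).add
      ((hfrac.sub (hlog.div_const (t ^ 2))).mul_const (z - t))).const_mul z).congr_deriv ?_
    simp only [id]
    field_simp
    ring
  have hlog : ∀ s ∈ Set.Icc (0 : ℝ) 1,
      HasDerivAt (fun s => log (1 + s * z)) (z / (1 + s * z)) s :=
    fun s hs => hasDerivAt_log_one_add_mul (pos_of hs.1 hz).ne'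
  have hbound : ∀ s ∈ Set.Ico (0 : ℝ) 1,
      z * (1 / (1 + s * t) - s / (1 + s * t) ^ 2 * (z - t)) ≤ z / (1 + s * z) := by
    intro s hs
    rw [← mul_one_div z]
    gcongr
    exact tangent_one_div_one_add_mul_le (pos_of hs.1 ht.le).ne' (pos_of hs.1 hz)
  have hle := image_le_of_deriv_right_le_deriv_boundary
    (HasDerivAt.continuousOn hf) (fun s hs => (hf s ⟨hs.1, hs.2.le⟩).hasDerivWithinAt)
    (by simp [f]) (HasDerivAt.continuousOn hlog)
    (fun s hs => (hlog s ⟨hs.1, hs.2.le⟩).hasDerivWithinAt)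
    hbound (Set.right_mem_Icc.2 zero_le_one)
  simpa only [f, one_mul] using hle

lemma one_add_mul_self_le_rpow_one_add_of_nonpos {s p : ℝ} (hs : -1 < s) (hp : p ≤ 0) :
    1 + p * s ≤ (1 + s) ^ p := by
  have hs' : 0 < 1 + s := by linarith
  have hlog : log (1 + s) ≤ s := by linarith [log_le_sub_one_of_pos hs']
  calc 1 + p * s ≤ log (1 + s) * p + 1 := by linarith [mul_le_mul_of_nonpos_left hlog hp]
    _ ≤ exp (log (1 + s) * p) := add_one_le_exp _
    _ = (1 + s) ^ p := (rpow_def_of_pos hs' p).symm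

lemma one_add_mul_self_add_mul_sq_le_rpow_one_add {x r : ℝ} (hx : 0 ≤ x) (hr0 : 0 ≤ r)
    (hr1 : r ≤ 1) : 1 + r * x + r * (r - 1) / 2 * x ^ 2 ≤ (1 + x) ^ r := by
  have hpoly (y : ℝ) : HasDerivAt (fun y => 1 + r * y + r * (r - 1) / 2 * y ^ 2)
      (r * (1 + (r - 1) * y)) y := by
    refine ((((hasDerivAt_id y).const_mul r).const_add 1).add
      (((hasDerivAt_id y).pow 2).const_mul (r * (r - 1) / 2))).congr_deriv ?_
    simp only [id]
    ring
  have hrpow : ∀ y ∈ Set.Icc 0 x, HasDerivAt (fun y => (1 + y) ^ r) (r * (1 + y) ^ (r - 1)) y := by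
    intro y hy
    simpa using ((hasDerivAt_id y).const_add 1).rpow_const (p := r)
      (Or.inl (add_pos_of_pos_of_nonneg one_pos hy.1).ne')
  refine image_le_of_deriv_right_le_deriv_boundary
    (HasDerivAt.continuousOn fun y _ => hpoly y) (fun y _ => (hpoly y).hasDerivWithinAt)
    (by simp) (HasDerivAt.continuousOn hrpow)
    (fun y hy => (hrpow y ⟨hy.1, hy.2.le⟩).hasDerivWithinAt) (fun y hy => ?_)
    (Set.right_mem_Icc.2 hx)
  have := one_add_mul_self_le_rpow_one_add_of_nonpos (s := y) (p := r - 1)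
    (by linarith [hy.1]) (by linarith)
  gcongr

lemma one_add_mul_self_add_min_le_rpow_one_add {x r : ℝ} (hx : 0 ≤ x) (hr : 0 ≤ r) :
    1 + r * x + min 0 (r * (r - 1) / 2 * x ^ 2) ≤ (1 + x) ^ r := by
  rcases le_total 1 r with hr1 | hr1
  · calc _ ≤ 1 + r * x := by linarith [min_le_left 0 (r * (r - 1) / 2 * x ^ 2)]
      _ ≤ (1 + x) ^ r := one_add_mul_self_le_rpow_one_add (by linarith) hr1
  · calc _ ≤ 1 + r * x + r * (r - 1) / 2 * x ^ 2 := by gcongr; exact min_le_right _ _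
      _ ≤ (1 + x) ^ r := one_add_mul_self_add_mul_sq_le_rpow_one_add hx hr hr1

end RealInequalities

section Moments

variable {Ω : Type*} [MeasurableSpace Ω] {μ : Measure Ω} {Y Z : Ω → ℝ}

lemma integral_eq_zero_of_integral_sq_eq_zero (hZ : MemLp Z 2 μ) (h : ∫ ω, Z ω ^ 2 ∂μ = 0) :
    ∫ ω, Z ω ∂μ = 0 := by
  have hsq := (integral_eq_zero_iff_of_nonneg (fun ω => sq_nonneg (Z ω)) hZ.integrable_sq).1 h
  refine integral_eq_zero_of_ae ?_
  filter_upwards [hsq] with ω hω using pow_eq_zero_iff two_ne_zero |>.1 hω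

lemma integrable_log_one_add (hZ0 : 0 ≤ᵐ[μ] Z) (hZ : Integrable Z μ) :
    Integrable (fun ω => log (1 + Z ω)) μ := by
  refine hZ.mono' (hZ.aemeasurable.const_add 1).log.aestronglyMeasurable ?_
  filter_upwards [hZ0] with ω (hω : 0 ≤ Z ω)
  rw [norm_of_nonneg (log_nonneg (by linarith))]
  linarith [log_le_sub_one_of_pos (show 0 < 1 + Z ω by linarith)]

lemma sq_integral_div_mul_log_le_integral_log_one_add (hZ0 : 0 ≤ᵐ[μ] Z) (hZ : Integrable Z μ)
    (hZ2 : MemLp Z 2 μ) :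
    (∫ ω, Z ω ∂μ) ^ 2 / (∫ ω, Z ω ^ 2 ∂μ) * log (1 + (∫ ω, Z ω ^ 2 ∂μ) / ∫ ω, Z ω ∂μ) ≤
      ∫ ω, log (1 + Z ω) ∂μ := by
  set N := ∫ ω, Z ω ∂μ
  set W := ∫ ω, Z ω ^ 2 ∂μ
  rcases eq_or_ne N 0 with hN0 | hN0
  · have : 0 ≤ ∫ ω, log (1 + Z ω) ∂μ := integral_nonneg_of_ae <| by
      filter_upwards [hZ0] with ω (hω : 0 ≤ Z ω) using log_nonneg (by linarith)
    simpa [hN0]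
  have hNpos : 0 < N := (integral_nonneg_of_ae hZ0).lt_of_ne' hN0
  have hWpos : 0 < W := (integral_nonneg fun ω => sq_nonneg (Z ω)).lt_of_ne' fun h =>
    hN0 (integral_eq_zero_of_integral_sq_eq_zero hZ2 h)
  set t := W / N with ht
  set k := 1 / (t * (1 + t)) - log (1 + t) / t ^ 2
  have hsplit (z : ℝ) :
      z * (log (1 + t) / t + k * (z - t)) = (log (1 + t) / t - k * t) * z + k * z ^ 2 := by ring
  have hint1 : Integrable (fun ω => (log (1 + t) / t - k * t) * Z ω) μ := hZ.const_mul _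
  have hint2 : Integrable (fun ω => k * Z ω ^ 2) μ := hZ2.integrable_sq.const_mul k
  calc N ^ 2 / W * log (1 + t) = (log (1 + t) / t - k * t) * N + k * W := by
        rw [ht]; field_simp; ring
    _ = ∫ ω, Z ω * (log (1 + t) / t + k * (Z ω - t)) ∂μ := by
        simp_rw [hsplit]
        rw [integral_add hint1 hint2, integral_const_mul, integral_const_mul]
    _ ≤ ∫ ω, log (1 + Z ω) ∂μ := by
        refine integral_mono_ae ?_ (integrable_log_one_add hZ0 hZ) ?_
        · simp_rw [hsplit]
          exact hint1.add hint2
        · filter_upwards [hZ0] with ω hω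
          exact mul_tangent_log_one_add_div_le (div_pos hWpos hNpos) hω

lemma one_add_two_mul_integral_add_min_le_exp (hZ0 : 0 ≤ᵐ[μ] Z) (hZ : Integrable Z μ)
    (hZ2 : MemLp Z 2 μ) :
    1 + 2 * ∫ ω, Z ω ∂μ + min 0 (2 * (∫ ω, Z ω ∂μ) ^ 2 - ∫ ω, Z ω ^ 2 ∂μ) ≤
      exp (2 * ∫ ω, log (1 + Z ω) ∂μ) := by
  have hlog := sq_integral_div_mul_log_le_integral_log_one_add hZ0 hZ hZ2
  have hWN := integral_eq_zero_of_integral_sq_eq_zero hZ2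
  have hN : 0 ≤ ∫ ω, Z ω ∂μ := integral_nonneg_of_ae hZ0
  have hW : 0 ≤ ∫ ω, Z ω ^ 2 ∂μ := integral_nonneg fun ω => sq_nonneg (Z ω)
  set N := ∫ ω, Z ω ∂μ
  set W := ∫ ω, Z ω ^ 2 ∂μ
  rcases eq_or_ne N 0 with hN0 | hN0
  · have : 0 ≤ ∫ ω, log (1 + Z ω) ∂μ := by simpa [hN0] using hlog
    calc 1 + 2 * N + min 0 (2 * N ^ 2 - W) ≤ 1 := by simp [hN0]
      _ ≤ exp (2 * ∫ ω, log (1 + Z ω) ∂μ) := one_le_exp (by positivity)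
  have hW0 : W ≠ 0 := fun h => hN0 (hWN h)
  set x := W / N with hx
  set r := 2 * (N ^ 2 / W) with hr
  have hx0 : 0 ≤ x := div_nonneg hW hN
  have hr0 : 0 ≤ r := by positivity
  calc 1 + 2 * N + min 0 (2 * N ^ 2 - W)
      = 1 + r * x + min 0 (r * (r - 1) / 2 * x ^ 2) := by
        congr 2 <;> (rw [hr, hx]; field_simp)
    _ ≤ (1 + x) ^ r := one_add_mul_self_add_min_le_rpow_one_add hx0 hr0
    _ = exp (2 * (N ^ 2 / W * log (1 + x))) := by
        rw [rpow_def_of_pos (by positivity), hr]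
        ring_nf
    _ ≤ exp (2 * ∫ ω, log (1 + Z ω) ∂μ) := by gcongr

variable [IsProbabilityMeasure μ]

lemma integral_one_add_sq_sub_exp_le_max (hZ0 : 0 ≤ᵐ[μ] Z) (hZ : MemLp Z 2 μ) :
    ∫ ω, (1 + Z ω) ^ 2 ∂μ - exp (2 * ∫ ω, log (1 + Z ω) ∂μ) ≤
      max (2 * Var[Z; μ]) (∫ ω, Z ω ^ 2 ∂μ) := by
  have hZ1 : Integrable Z μ := hZ.integrable one_le_two
  have hexpand : ∫ ω, (1 + Z ω) ^ 2 ∂μ = 1 + 2 * ∫ ω, Z ω ∂μ + ∫ ω, Z ω ^ 2 ∂μ := by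
    have hlin : Integrable (fun ω => 1 + 2 * Z ω) μ :=
      (integrable_const 1).add (hZ1.const_mul 2)
    simp_rw [add_sq, one_pow, mul_one]
    rw [integral_add hlin hZ.integrable_sq, integral_add (integrable_const 1) (hZ1.const_mul 2),
      integral_const_mul]
    simp
  have hvar : Var[Z; μ] = ∫ ω, Z ω ^ 2 ∂μ - (∫ ω, Z ω ∂μ) ^ 2 := variance_eq_sub hZ
  have hexp := one_add_two_mul_integral_add_min_le_exp hZ0 hZ1 hZ
  rw [le_max_iff, hexpand, hvar]
  rcases min_choice 0 (2 * (∫ ω, Z ω ∂μ) ^ 2 - ∫ ω, Z ω ^ 2 ∂μ) with hmin | hmin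
  · right; linarith
  · left; linarith

lemma integral_sq_sub_exp_two_mul_integral_log_le_max {a : ℝ} (ha : 0 < a) (hY : MemLp Y 2 μ)
    (haY : ∀ᵐ ω ∂μ, a ≤ Y ω) :
    ∫ ω, Y ω ^ 2 ∂μ - exp (2 * ∫ ω, log (Y ω) ∂μ) ≤
      max (2 * Var[Y; μ]) (∫ ω, (Y ω - a) ^ 2 ∂μ) := by
  obtain ⟨Z, rfl, hZ⟩ : ∃ Z : Ω → ℝ, Y = (fun ω => a * (1 + Z ω)) ∧ MemLp Z 2 μ := by
    refine ⟨fun ω => a⁻¹ * (Y ω - a), ?_, (hY.sub (memLp_const a)).const_mul a⁻¹⟩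
    ext ω
    field_simp
    ring
  have hZ0 : 0 ≤ᵐ[μ] Z := by
    filter_upwards [haY] with ω hω
    simpa using (le_mul_iff_one_le_right ha).1 hω
  have hlog : ∫ ω, log (a * (1 + Z ω)) ∂μ = log a + ∫ ω, log (1 + Z ω) ∂μ := by
    have hmul : ∀ᵐ ω ∂μ, log (a * (1 + Z ω)) = log a + log (1 + Z ω) := by
      filter_upwards [hZ0] with ω (hω : 0 ≤ Z ω) using log_mul ha.ne' (by positivity)
    rw [integral_congr_ae hmul, integral_add (integrable_const _)
      (integrable_log_one_add hZ0 (hZ.integrable one_le_two))]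
    simp
  have hexp : exp (2 * ∫ ω, log (a * (1 + Z ω)) ∂μ) =
      a ^ 2 * exp (2 * ∫ ω, log (1 + Z ω) ∂μ) := by
    rw [hlog, mul_add, exp_add, ← Nat.cast_ofNat (R := ℝ), exp_nat_mul, exp_log ha]
  have hdev (ω : Ω) : (a * (1 + Z ω) - a) ^ 2 = a ^ 2 * Z ω ^ 2 := by ring
  have hscaled := mul_le_mul_of_nonneg_left (integral_one_add_sq_sub_exp_le_max hZ0 hZ)
    (sq_nonneg a)
  rw [hexp, variance_const_mul, variance_const_add hZ.aestronglyMeasurable]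
  simp_rw [hdev, mul_pow, integral_const_mul]
  rwa [mul_sub, mul_max_of_nonneg _ _ (sq_nonneg a), mul_left_comm] at hscaled

end Moments

/-- Upper bound on the arithmetic-geometric mean difference:
`E X - exp (E log X) ≤ max (2 Var √X) (E (√X - √m_X)²)` where `m_X = essInf X`. -/
theorem arith_geom_upper_bound {Ω : Type*} [MeasurableSpace Ω] {μ : Measure Ω}
    [IsProbabilityMeasure μ] (X : Ω → ℝ) (hXm : Measurable X)
    (hXnn : ∀ᵐ ω ∂μ, 0 ≤ X ω) (hXint : Integrable X μ)
    (hlog : Integrable (fun ω => Real.log (X ω)) μ) :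
    (∫ ω, X ω ∂μ) - Real.exp (∫ ω, Real.log (X ω) ∂μ) ≤
      max (2 * variance (fun ω => Real.sqrt (X ω)) μ)
        (∫ ω, (Real.sqrt (X ω) - Real.sqrt (essInf X μ)) ^ 2 ∂μ) := by
  have hsq : (fun ω => √(X ω) ^ 2) =ᵐ[μ] X := by
    filter_upwards [hXnn] with ω hω using sq_sqrt hω
  have hintsq : ∫ ω, √(X ω) ^ 2 ∂μ = ∫ ω, X ω ∂μ := integral_congr_ae hsq
  rcases le_or_gt (essInf X μ) 0 with hm | hm
  · refine le_max_of_le_right ?_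
    simp only [sqrt_eq_zero_of_nonpos hm, sub_zero, hintsq]
    exact sub_le_self _ (exp_pos _).le
  have hL2 : MemLp (fun ω => √(X ω)) 2 μ :=
    (memLp_two_iff_integrable_sq hXm.sqrt.aestronglyMeasurable).2 (hXint.congr hsq.symm)
  have hsqrt_ge : ∀ᵐ ω ∂μ, √(essInf X μ) ≤ √(X ω) := by
    filter_upwards [ae_essInf_le (f := X) (hf := Filter.isBoundedUnder_of_eventually_ge hXnn)]
      with ω hω using sqrt_le_sqrt hω
  have hlog_eq : 2 * ∫ ω, log √(X ω) ∂μ = ∫ ω, log (X ω) ∂μ := by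
    rw [← integral_const_mul]
    refine integral_congr_ae ?_
    filter_upwards [hXnn] with ω hω
    rw [log_sqrt hω, mul_div_cancel₀ _ two_ne_zero]
  simpa only [hintsq, hlog_eq] using
    integral_sq_sub_exp_two_mul_integral_log_le_max (sqrt_pos.2 hm) hL2 hsqrt_ge
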